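/- For every integer N ≥ 2, 𝔼 V_{ℰ²,N} = 1 − (2N/(3π^N)) ∫₀^π (t + sin t)^{N−1} (1 + cos t)² dt, where ℰ² is an ellipse (e.g. the closed unit disc in ℝ²). In particular, 𝔼 V_{ℰ²,2} = 16/(9π²) and 𝔼 V_{ℰ²,3} = 35/(12π²). -/

import Mathlib

open MeasureTheory Set

noncomputable section

variable {E : Type*} [NormedAddCommGroup E] [InnerProductSpace ℝ E]
open scoped Real

/-- A symmetric convex body: a compact convex set with nonempty interior with `K = -K`. -/
def IsSymConvexBody (K : Set E) : Prop :=
  IsCompact K ∧ Convex ℝ K ∧ (interior K).Nonempty ∧ K = -K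

/-- `momentU n N K p = 𝔼 U_{K,N}^p`, the `p`-th moment of the normalized volume of the
convex hull of `N` independent uniform random points in `K ⊆ ℝⁿ`. -/
def momentU (n N : ℕ) (K : Set (EuclideanSpace ℝ (Fin n))) (p : ℝ) : ℝ :=
  (∫ x : Fin N → EuclideanSpace ℝ (Fin n) in {x | ∀ i, x i ∈ K},
      ((volume (convexHull ℝ (Set.range x))).toReal / (volume K).toReal) ^ p) /
    (volume K).toReal ^ N

/-- `momentV n N K p = 𝔼 V_{K,N}^p`, the `p`-th moment of the normalized volume of the
symmetric convex hull `conv{±x₁, …, ±x_N}` of `N` independent uniform random points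
in `K ⊆ ℝⁿ`. -/
def momentV (n N : ℕ) (K : Set (EuclideanSpace ℝ (Fin n))) (p : ℝ) : ℝ :=
  (∫ x : Fin N → EuclideanSpace ℝ (Fin n) in {x | ∀ i, x i ∈ K},
      ((volume (convexHull ℝ (Set.range x ∪ -Set.range x))).toReal / (volume K).toReal) ^ p) /
    (volume K).toReal ^ N

/-! Almost every point `y` outside the hull of the points `±xᵢ` is joined to exactly two of them by
a line supporting the hull, and the line through `y` and `a` supports the hull precisely when all
the `xⱼ` lie in the strip between that line and its reflection in the origin. Integrating out the
other `N - 1` points, the missed area of a convex body `K` is governed by the integral of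
`volume (K ∩ strip y a) ^ (N - 1)` over `y, a ∈ K`. For the unit disc, the Blaschke–Petkantschin
formula reduces this to an integral over the distance `sin (t / 2)` of the line from the origin: the
strip has area `t + sin t` there, and the pairs of points on a chord of length `2 * cos (t / 2)`,
weighted by their distance, account for the factor `(1 + cos t) ^ 2`. -/

open Metric
open scoped ENNReal

attribute [local instance] Complex.finrank_real_complex_fact

local notation "ω" => Complex.orientation.areaForm

section Endpoints

variable {α ι : Type*} [LinearOrder α]

lemma exists_sumElim_eq_min (a b : ι → α) (i : ι) :
    ∃ k, Sum.elim a b k = min (a i) (b i) := by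
  rcases min_choice (a i) (b i) with h | h
  · exact ⟨.inl i, h.symm⟩
  · exact ⟨.inr i, h.symm⟩

lemma exists_sumElim_eq_max (a b : ι → α) (i : ι) :
    ∃ k, Sum.elim a b k = max (a i) (b i) :=
  exists_sumElim_eq_min (α := αᵒᵈ) a b i

lemma min_lt_max_of_sumElim_injective {a b : ι → α} (hinj : (Sum.elim a b).Injective) (i j : ι)
    (hle : min (a i) (b i) ≤ max (a j) (b j)) : min (a i) (b i) < max (a j) (b j) := by
  refine hle.lt_of_ne fun heq ↦ ?_
  have hne : ∀ k l, k ≠ l → Sum.elim a b k ≠ Sum.elim a b l := fun _ _ h ↦ hinj.ne h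
  have hij : i = j := by
    by_contra hij
    have := hne (.inl i) (.inl j) (by simpa)
    have := hne (.inl i) (.inr j) (by simp)
    have := hne (.inr i) (.inl j) (by simp)
    have := hne (.inr i) (.inr j) (by simpa)
    grind
  subst hij
  exact hne (.inl i) (.inr i) (by simp) (inf_eq_sup.1 heq)

open Classical in
lemma card_endpoints_mem_iInter_uIcc [Fintype ι] [Nonempty ι] {a b : ι → α}
    (hinj : (Sum.elim a b).Injective) (hne : (⋂ j, uIcc (a j) (b j)).Nonempty) :
    Finset.card {k | Sum.elim a b k ∈ ⋂ j, uIcc (a j) (b j)} = 2 := by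
  obtain ⟨i, hi⟩ := Finite.exists_max fun i ↦ min (a i) (b i)
  obtain ⟨j, hj⟩ := Finite.exists_min fun j ↦ max (a j) (b j)
  have hinter : ⋂ j, uIcc (a j) (b j) = Icc (min (a i) (b i)) (max (a j) (b j)) := by
    ext t
    simp only [mem_iInter, uIcc, mem_Icc]
    exact ⟨fun h ↦ ⟨(h i).1, (h j).2⟩, fun h k ↦ ⟨(hi k).trans h.1, h.2.trans (hj k)⟩⟩
  rw [hinter] at hne ⊢
  have hlt := min_lt_max_of_sumElim_injective hinj i j (nonempty_Icc.1 hne)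
  obtain ⟨k, hk⟩ := exists_sumElim_eq_min a b i
  obtain ⟨l, hl⟩ := exists_sumElim_eq_max a b j
  have hkl : k ≠ l := fun h ↦ hlt.ne (by rw [← hk, ← hl, h])
  rw [← Finset.card_pair hkl]
  congr 1
  ext m
  have hm : Sum.elim a b m ≤ min (a i) (b i) ∨ max (a j) (b j) ≤ Sum.elim a b m := by
    rcases m with m | m <;> grind
  simp only [Finset.mem_filter_univ, Finset.mem_insert, Finset.mem_singleton, ← hinj.eq_iff, hk, hl,
    mem_Icc]
  grind

end Endpoints

section Separation

variable {F : Type*} [NormedAddCommGroup F] [NormedSpace ℝ F]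

lemma isClosed_absConvexHull_of_finite {s : Set F} (hs : s.Finite) :
    IsClosed (absConvexHull ℝ s) := by
  rw [← convexHull_union_neg_eq_absConvexHull]
  exact (hs.union hs.neg).isClosed_convexHull ℝ

lemma exists_dual_eq_one_of_notMem_absConvexHull {s : Set F} (hs : IsClosed (absConvexHull ℝ s))
    (hne : s.Nonempty) {y : F} (hy : y ∉ absConvexHull ℝ s) :
    ∃ f : StrongDual ℝ F, f y = 1 ∧ ∀ x ∈ s, |f x| ≤ 1 := by
  obtain ⟨f, u, hfu, hu⟩ := geometric_hahn_banach_closed_point convex_absConvexHull hs hy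
  have habs : ∀ x ∈ s, |f x| < u := fun x hx ↦ by
    have hx' : x ∈ absConvexHull ℝ s := subset_absConvexHull hx
    have hneg := hfu _ (balanced_absConvexHull.neg_mem_iff.2 hx')
    rw [map_neg] at hneg
    exact abs_lt.2 ⟨by linarith, hfu x hx'⟩
  have hfy : 0 < f y := by
    obtain ⟨x, hx⟩ := hne
    exact ((abs_nonneg _).trans_lt (habs x hx)).trans hu
  refine ⟨(f y)⁻¹ • f, by simp [hfy.ne'], fun x hx ↦ ?_⟩
  rw [smul_apply, smul_eq_mul, inv_mul_eq_div, abs_div, abs_of_pos hfy,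
    div_le_one hfy]
  exact ((habs x hx).trans hu).le

lemma notMem_interior_absConvexHull_of_dual_eq_one {s : Set F} {y : F} {f : StrongDual ℝ F}
    (hfy : f y = 1) (hfs : ∀ x ∈ s, |f x| ≤ 1) : y ∉ interior (absConvexHull ℝ s) := by
  have habs : AbsConvex ℝ (f ⁻¹' closedBall 0 1) :=
    ⟨balanced_closedBall_zero.mulActionHom_preimage f.toMulActionHom,
      (convex_closedBall _ _).linear_preimage f.toLinearMap⟩
  have hsub : absConvexHull ℝ s ⊆ f ⁻¹' closedBall 0 1 :=
    absConvexHull_min (fun x hx ↦ by simpa using hfs x hx) habs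
  have hopen : IsOpenMap f := f.isOpenMap_of_ne_zero (by rintro rfl; simp at hfy)
  intro hy
  have : f y ∈ interior (closedBall 0 1) :=
    interior_maximal (image_subset_iff.2 (interior_subset.trans hsub))
      (hopen _ isOpen_interior) (mem_image_of_mem f hy)
  rw [interior_closedBall _ one_ne_zero, hfy] at this
  simp at this

end Separation

section Strip

lemma areaForm_eq_re_mul_im_sub (a b : ℂ) : ω a b = a.re * b.im - a.im * b.re := by
  simp only [Complex.areaForm, Complex.mul_im, Complex.conj_re, Complex.conj_im]
  ring

lemma areaForm_mul_mul (c a b : ℂ) : ω (c * a) (c * b) = ‖c‖ ^ 2 * ω a b := by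
  simp only [areaForm_eq_re_mul_im_sub, Complex.sq_norm, Complex.normSq_apply, Complex.mul_im,
    Complex.mul_re]
  ring

lemma areaForm_eq_mul_areaForm_div {c : ℂ} (hc : c ≠ 0) (a b : ℂ) :
    ω a b = ‖c‖ ^ 2 * ω (a / c) (b / c) := by
  rw [← areaForm_mul_mul, mul_div_cancel₀ _ hc, mul_div_cancel₀ _ hc]

lemma areaForm_eq_mul_im_div {y : ℂ} (hy : y ≠ 0) (a : ℂ) : ω y a = ‖y‖ ^ 2 * (a / y).im := by
  rw [areaForm_eq_mul_areaForm_div hy, div_self hy, areaForm_eq_re_mul_im_sub, Complex.one_re,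
    Complex.one_im]
  ring

lemma areaForm_sub_left_eq_neg_areaForm (y a : ℂ) : ω (a - y) a = -ω y a := by
  simp only [areaForm_eq_re_mul_im_sub, Complex.sub_re, Complex.sub_im]
  ring

lemma areaForm_sub_sub (a b y : ℂ) : ω (a - y) (b - y) = ω a b - ω (a - b) y := by
  simp only [areaForm_eq_re_mul_im_sub, Complex.sub_re, Complex.sub_im]
  ring

/-- The strip bounded by the line through `y` and `a` and by the reflection of that line in the
origin. -/
def strip (y a : ℂ) : Set ℂ := {w | |ω (a - y) w| ≤ |ω y a|}

lemma self_mem_strip (y a : ℂ) : a ∈ strip y a := by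
  rw [strip, mem_ofPred_eq, areaForm_sub_left_eq_neg_areaForm, abs_neg]

lemma neg_mem_strip_iff {y a w : ℂ} : -w ∈ strip y a ↔ w ∈ strip y a := by
  rw [strip, mem_ofPred_eq, map_neg, abs_neg, mem_ofPred_eq]

lemma isClosed_setOf_mem_strip {X : Type*} [TopologicalSpace X] {f g h : X → ℂ}
    (hf : Continuous f) (hg : Continuous g) (hh : Continuous h) :
    IsClosed {p | h p ∈ strip (f p) (g p)} := by
  simp only [strip, mem_ofPred_eq, areaForm_eq_re_mul_im_sub]
  exact isClosed_le (by fun_prop) (by fun_prop)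

lemma strip_mk_mk {h s r : ℝ} (hr : 0 < r) : strip ⟨s, h⟩ ⟨s + r, h⟩ = {w | |w.im| ≤ |h|} := by
  have hline : s * h - h * (s + r) = -(r * h) := by ring
  ext w
  simp only [strip, mem_ofPred_eq, areaForm_eq_re_mul_im_sub, Complex.sub_re, Complex.sub_im,
    add_sub_cancel_left, sub_self, zero_mul, sub_zero, hline]
  rw [abs_neg, abs_mul, abs_mul, mul_le_mul_iff_right₀ (abs_pos.2 hr.ne')]

lemma mul_mem_strip_mul_mul_iff {u y a w : ℂ} (hu : u ≠ 0) :
    u * w ∈ strip (u * y) (u * a) ↔ w ∈ strip y a := by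
  rw [strip, mem_ofPred_eq, ← mul_sub, areaForm_mul_mul, areaForm_mul_mul, abs_mul, abs_mul,
    mul_le_mul_iff_right₀ (by positivity), strip, mem_ofPred_eq]

/-- The slope `τ` for which the functional `w ↦ w.re + τ * w.im` takes the value `1` at `q`. As the
functional also takes the value `1` at `1`, its level line is the line through `1` and `q`. -/
def tangentSlope (q : ℂ) : ℝ := (1 - q.re) / q.im

lemma abs_re_add_mul_im_le_one_iff {q : ℂ} (hq : q.im ≠ 0) (τ : ℝ) :
    |q.re + τ * q.im| ≤ 1 ↔ τ ∈ uIcc (tangentSlope q) (tangentSlope (-q)) := by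
  have hneg : tangentSlope (-q) = (-1 - q.re) / q.im := by
    rw [tangentSlope, Complex.neg_re, Complex.neg_im]
    field_simp
    ring
  rw [hneg, tangentSlope, mem_uIcc, abs_le]
  rcases hq.lt_or_gt with hq | hq
  · rw [div_le_iff_of_neg hq, le_div_iff_of_neg hq, div_le_iff_of_neg hq, le_div_iff_of_neg hq]
    grind
  · rw [div_le_iff₀ hq, le_div_iff₀ hq, div_le_iff₀ hq, le_div_iff₀ hq]
    grind

lemma mem_strip_iff_abs_le_one {y a : ℂ} (h : ω y a ≠ 0) (w : ℂ) :
    w ∈ strip y a ↔ |(w / y).re + tangentSlope (a / y) * (w / y).im| ≤ 1 := by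
  have hy : y ≠ 0 := by rintro rfl; simp at h
  have him : (a / y).im ≠ 0 := right_ne_zero_of_mul (areaForm_eq_mul_im_div hy a ▸ h)
  have hyw : ω (a - y) w = -ω y a * ((w / y).re + tangentSlope (a / y) * (w / y).im) := by
    rw [areaForm_eq_mul_areaForm_div hy, areaForm_eq_mul_im_div hy, sub_div, div_self hy,
      areaForm_eq_re_mul_im_sub, Complex.sub_re, Complex.sub_im, Complex.one_re, Complex.one_im,
      tangentSlope]
    field_simp
    ring
  rw [strip, mem_ofPred_eq, hyw, abs_mul, abs_neg, mul_le_iff_le_one_right (abs_pos.2 h)]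

lemma areaForm_sub_sub_eq_zero_of_tangentSlope_eq {y a b : ℂ} (ha : ω y a ≠ 0) (hb : ω y b ≠ 0)
    (h : tangentSlope (a / y) = tangentSlope (b / y)) : ω (a - y) (b - y) = 0 := by
  have hy : y ≠ 0 := by rintro rfl; simp at ha
  have him : ∀ c, ω y c ≠ 0 → (c / y).im ≠ 0 := fun c hc ↦
    right_ne_zero_of_mul (areaForm_eq_mul_im_div hy c ▸ hc)
  rw [tangentSlope, tangentSlope, div_eq_div_iff (him a ha) (him b hb)] at h
  rw [areaForm_eq_mul_areaForm_div hy, sub_div, sub_div, div_self hy, areaForm_eq_re_mul_im_sub]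
  simp only [Complex.sub_re, Complex.one_re, Complex.sub_im, Complex.one_im]
  linear_combination -‖y‖ ^ 2 * h

lemma dual_apply_eq_re_add_mul_im (f : StrongDual ℝ ℂ) {y : ℂ} (hy : y ≠ 0) (hfy : f y = 1)
    (w : ℂ) : f w = (w / y).re + f (y * Complex.I) * (w / y).im := by
  have hw : w = (w / y).re • y + (w / y).im • (y * Complex.I) := by
    nth_rw 1 [← mul_div_cancel₀ w hy, ← Complex.re_add_im (w / y)]
    simp only [Complex.real_smul]
    ring
  nth_rw 1 [hw]
  rw [map_add, map_smul, map_smul, hfy, smul_eq_mul, smul_eq_mul]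
  ring

end Strip

section Tangents

variable {ι : Type*}

/-- The family of points `±xᵢ`, listed twice over the index set of `x`. -/
def symmFamily {G : Type*} [Neg G] (x : ι → G) : ι ⊕ ι → G := Sum.elim x (-x)

/-- The point `y` lies on none of the lines through two of the points `±xᵢ`. -/
def InGeneralPosition (x : ι → ℂ) (y : ℂ) : Prop :=
  Pairwise fun k l ↦ ω (symmFamily x k - y) (symmFamily x l - y) ≠ 0

lemma InGeneralPosition.areaForm_ne_zero {x : ι → ℂ} {y : ℂ} (h : InGeneralPosition x y)
    (k : ι ⊕ ι) : ω y (symmFamily x k) ≠ 0 := by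
  intro hk
  have hi : ∃ i, ω y (x i) = 0 := by
    rcases k with i | i
    · exact ⟨i, hk⟩
    · rw [symmFamily, Sum.elim_inr, Pi.neg_apply, map_neg, neg_eq_zero] at hk
      exact ⟨i, hk⟩
  obtain ⟨i, hi⟩ := hi
  refine h (Sum.inl_ne_inr : Sum.inl i ≠ Sum.inr i) ?_
  rw [areaForm_eq_re_mul_im_sub] at hi ⊢
  simp only [symmFamily, Sum.elim_inl, Sum.elim_inr, Pi.neg_apply, Complex.sub_re, Complex.sub_im,
    Complex.neg_re, Complex.neg_im]
  linear_combination 2 * hi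

lemma InGeneralPosition.injective_tangentSlope {x : ι → ℂ} {y : ℂ} (h : InGeneralPosition x y) :
    (fun k ↦ tangentSlope (symmFamily x k / y)).Injective := by
  intro k l hkl
  by_contra hne
  exact h hne (areaForm_sub_sub_eq_zero_of_tangentSlope_eq (h.areaForm_ne_zero k)
    (h.areaForm_ne_zero l) hkl)

open Classical in
lemma InGeneralPosition.card_tangents_eq_two [Fintype ι] [Nonempty ι] {x : ι → ℂ} {y : ℂ}
    (h : InGeneralPosition x y) (hy : y ∉ absConvexHull ℝ (range x)) :
    Finset.card {k | ∀ j, x j ∈ strip y (symmFamily x k)} = 2 := by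
  have hy0 : y ≠ 0 := by
    rintro rfl
    simpa using h.areaForm_ne_zero (.inl (Classical.arbitrary ι))
  have him : ∀ j, (x j / y).im ≠ 0 := fun j ↦
    right_ne_zero_of_mul (areaForm_eq_mul_im_div hy0 (x j) ▸ h.areaForm_ne_zero (.inl j))
  set a : ι → ℝ := fun j ↦ tangentSlope (x j / y)
  set b : ι → ℝ := fun j ↦ tangentSlope (-(x j / y))
  have hab : Sum.elim a b = fun k ↦ tangentSlope (symmFamily x k / y) := by
    ext (j | j)
    · rfl
    · simp only [symmFamily, Sum.elim_inr, Pi.neg_apply, neg_div, b]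
  obtain ⟨f, hfy, hfx⟩ :=
    exists_dual_eq_one_of_notMem_absConvexHull
      (isClosed_absConvexHull_of_finite (finite_range x)) (range_nonempty x) hy
  have hne : (⋂ j, uIcc (a j) (b j)).Nonempty := by
    refine ⟨f (y * Complex.I), mem_iInter.2 fun j ↦ ?_⟩
    rw [← abs_re_add_mul_im_le_one_iff (him j), ← dual_apply_eq_re_add_mul_im f hy0 hfy]
    exact hfx _ (mem_range_self j)
  convert card_endpoints_mem_iInter_uIcc (hab ▸ h.injective_tangentSlope) hne using 3 with k
  simp only [mem_iInter, mem_strip_iff_abs_le_one (h.areaForm_ne_zero k),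
    abs_re_add_mul_im_le_one_iff (him _), hab, a, b]

lemma notMem_interior_absConvexHull_of_forall_mem_strip {s : Set ℂ} {y a : ℂ} (h : ω y a ≠ 0)
    (hs : ∀ w ∈ s, w ∈ strip y a) : y ∉ interior (absConvexHull ℝ s) := by
  refine notMem_interior_absConvexHull_of_dual_eq_one
    (f := (ω y a)⁻¹ • LinearMap.toContinuousLinearMap (ω (y - a))) ?_ fun w hw ↦ ?_
  · simp only [smul_apply, LinearMap.coe_toContinuousLinearMap', smul_eq_mul]
    rw [← neg_sub, map_neg, LinearMap.neg_apply, map_sub, LinearMap.sub_apply,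
      Complex.orientation.areaForm_apply_self, sub_zero, Complex.orientation.areaForm_swap a y,
      neg_neg, inv_mul_cancel₀ h]
  · simp only [smul_apply, LinearMap.coe_toContinuousLinearMap', smul_eq_mul]
    rw [← neg_sub, map_neg, LinearMap.neg_apply, mul_neg, abs_neg, inv_mul_eq_div, abs_div]
    exact div_le_one_of_le₀ (hs w hw) (abs_nonneg _)

end Tangents

section GenericPosition

lemma ae_linearMap_ne {V W : Type*} [NormedAddCommGroup V] [NormedSpace ℝ V]
    [FiniteDimensional ℝ V] [MeasurableSpace V] [BorelSpace V] (μ : Measure V) [μ.IsAddHaarMeasure]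
    [AddCommGroup W] [Module ℝ W] {L : V →ₗ[ℝ] W} (hL : L ≠ 0) (c : W) : ∀ᵐ v ∂μ, L v ≠ c := by
  set s : AffineSubspace ℝ V := (AffineSubspace.mk' c ⊥).comap L.toAffineMap with hs
  have hmem : ∀ v, v ∈ s ↔ L v = c := fun v ↦ by simp [hs, AffineSubspace.mem_mk', sub_eq_zero]
  have hs_top : s ≠ ⊤ := fun htop ↦ by
    have hc : ∀ v, L v = c := fun v ↦ (hmem v).1 (htop ▸ AffineSubspace.mem_top ℝ V v)
    exact hL (LinearMap.ext fun v ↦ by rw [hc v, ← hc 0, map_zero, LinearMap.zero_apply])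
  rw [ae_iff]
  convert Measure.addHaar_affineSubspace μ s hs_top using 2
  ext v
  simp [hmem]

variable {ι : Type*}

lemma exists_symmFamily_ne {k l : ι ⊕ ι} (hkl : k ≠ l) :
    ∃ x : ι → ℂ, symmFamily x k ≠ symmFamily x l := by
  classical
  refine ⟨Pi.single (k.elim id id) 1, ?_⟩
  rcases k with i | i <;> rcases l with j | j <;> by_cases hij : j = i <;>
    simp_all [symmFamily, CharZero.eq_neg_self_iff, CharZero.neg_eq_self_iff]

lemma ae_injective_symmFamily [Fintype ι] : ∀ᵐ x : ι → ℂ, (symmFamily x).Injective := by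
  have hpair : ∀ᵐ x : ι → ℂ, ∀ k l : ι ⊕ ι, k ≠ l → symmFamily x k ≠ symmFamily x l := by
    simp only [ae_all_iff]
    intro k l hkl
    set L : ι ⊕ ι → (ι → ℂ) →ₗ[ℝ] ℂ := Sum.elim LinearMap.proj (-LinearMap.proj)
    have hL : ∀ x k, L k x = symmFamily x k := fun x k ↦ by rcases k with i | i <;> rfl
    obtain ⟨x₀, hx₀⟩ := exists_symmFamily_ne hkl
    have hsub : L k - L l ≠ 0 := fun h ↦ hx₀ <| by
      rw [← hL, ← hL, sub_eq_zero.1 h]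
    filter_upwards [ae_linearMap_ne volume hsub 0] with x hx
    rwa [LinearMap.sub_apply, hL, hL, sub_ne_zero] at hx
  filter_upwards [hpair] with x hx k l hkl
  exact not_imp_not.1 (hx k l) hkl

lemma ae_inGeneralPosition [Finite ι] {x : ι → ℂ} (hx : (symmFamily x).Injective) :
    ∀ᵐ y, InGeneralPosition x y := by
  simp only [InGeneralPosition, Pairwise, ae_all_iff]
  intro k l hkl
  have hne : ω (symmFamily x k - symmFamily x l) ≠ 0 := fun h ↦ by
    have := Complex.orientation.areaForm_rightAngleRotation_right
      (symmFamily x k - symmFamily x l) (symmFamily x k - symmFamily x l)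
    rw [h, LinearMap.zero_apply, eq_comm, inner_self_eq_zero, sub_eq_zero] at this
    exact hkl (hx this)
  filter_upwards [ae_linearMap_ne volume hne (ω (symmFamily x k) (symmFamily x l))] with y hy
  rw [areaForm_sub_sub]
  exact sub_ne_zero.2 hy.symm

end GenericPosition

section Slicing

variable {X : Type*} [MeasurableSpace X]

lemma absolutelyContinuous_pi_const {μ ν : Measure X} [SigmaFinite μ] [SigmaFinite ν] (h : μ ≪ ν)
    (n : ℕ) : Measure.pi (fun _ : Fin n ↦ μ) ≪ Measure.pi fun _ ↦ ν := by
  induction n with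
  | zero => rw [Measure.pi_of_empty, Measure.pi_of_empty]
  | succ n ih =>
    have hsplit : ∀ (ρ : Measure X) [SigmaFinite ρ], (ρ.prod (Measure.pi fun _ ↦ ρ)).map
        (MeasurableEquiv.piFinSuccAbove (fun _ : Fin (n + 1) ↦ X) 0).symm = Measure.pi fun _ ↦ ρ :=
      fun ρ _ ↦ (measurePreserving_piFinSuccAbove (fun _ ↦ ρ) 0).symm.map_eq
    rw [← hsplit μ, ← hsplit ν]
    exact (h.prod ih).map (MeasurableEquiv.measurable _)

lemma pi_setOf_forall_mem_apply (μ : Measure X) [SigmaFinite μ] {S : X → Set X}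
    (hS : MeasurableSet {p : X × X | p.2 ∈ S p.1}) (hself : ∀ a, a ∈ S a) {M : ℕ}
    (i : Fin (M + 1)) :
    Measure.pi (fun _ ↦ μ) {x | ∀ j, x j ∈ S (x i)} = ∫⁻ a, μ (S a) ^ M ∂μ := by
  have hmeas : MeasurableSet {x : Fin (M + 1) → X | ∀ j, x j ∈ S (x i)} := by
    have hpair : ∀ j, Measurable fun x : Fin (M + 1) → X ↦ (x i, x j) := fun j ↦ by fun_prop
    rw [ofPred_forall]
    exact MeasurableSet.iInter fun j ↦ hpair j hS
  rw [← (measurePreserving_piFinSuccAbove (fun _ : Fin (M + 1) ↦ μ) i).symm.measure_preimage_equiv,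
    Measure.prod_apply (MeasurableEquiv.measurable _ hmeas)]
  refine lintegral_congr fun a ↦ ?_
  have hslice : Prod.mk a ⁻¹' ((MeasurableEquiv.piFinSuccAbove (fun _ ↦ X) i).symm ⁻¹'
      {x | ∀ j, x j ∈ S (x i)}) = univ.pi fun _ ↦ S a := by
    ext x
    simp [Fin.forall_iff_succAbove i, hself]
  rw [hslice, Measure.pi_pi, Finset.prod_const, Finset.card_univ, Fintype.card_fin]

lemma lintegral_measure_slice_comm {Y : Type*} [MeasurableSpace Y] {μ : Measure X} {ν : Measure Y}
    [SFinite μ] [SFinite ν] {T : Set (X × Y)} (hT : MeasurableSet T) :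
    ∫⁻ x, ν {y | (x, y) ∈ T} ∂μ = ∫⁻ y, μ {x | (x, y) ∈ T} ∂ν :=
  (Measure.prod_apply hT).symm.trans (Measure.prod_apply_symm hT)

end Slicing

section MissedMeasure

variable {μ : Measure ℂ} {ι : Type*}

lemma isClosed_setOf_forall_mem_strip (k : ι ⊕ ι) :
    IsClosed {p : (ι → ℂ) × ℂ | ∀ j, p.1 j ∈ strip p.2 (symmFamily p.1 k)} := by
  have hk : Continuous fun p : (ι → ℂ) × ℂ ↦ symmFamily p.1 k := by
    rcases k with i | i
    · exact (continuous_apply i).comp continuous_fst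
    · exact ((continuous_apply i).comp continuous_fst).neg
  rw [ofPred_forall]
  exact isClosed_iInter fun j ↦
    isClosed_setOf_mem_strip continuous_snd hk ((continuous_apply j).comp continuous_fst)

/-- The sum counts the points `±xᵢ` that a line supporting the hull joins to `y`. -/
lemma ae_sum_indicator_forall_mem_strip [Fintype ι] [Nonempty ι] {x : ι → ℂ}
    (hx : (symmFamily x).Injective) :
    ∀ᵐ y, ∑ k, {y | ∀ j, x j ∈ strip y (symmFamily x k)}.indicator (1 : ℂ → ℝ≥0∞) y =
      2 * ((absConvexHull ℝ (range x))ᶜ).indicator 1 y := by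
  classical
  have hfrontier : ∀ᵐ y, y ∉ frontier (absConvexHull ℝ (range x)) :=
    measure_eq_zero_iff_ae_notMem.1 (convex_absConvexHull.addHaar_frontier volume)
  filter_upwards [ae_inGeneralPosition hx, hfrontier] with y hgen hyf
  by_cases hy : y ∈ absConvexHull ℝ (range x)
  · have hyi : y ∈ interior (absConvexHull ℝ (range x)) := by
      by_contra hyi
      exact hyf ⟨subset_closure hy, hyi⟩
    rw [indicator_of_notMem (notMem_compl_iff.2 hy), mul_zero]
    refine Finset.sum_eq_zero fun k _ ↦ indicator_of_notMem (fun hk ↦ ?_) _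
    exact notMem_interior_absConvexHull_of_forall_mem_strip (hgen.areaForm_ne_zero k)
      (forall_mem_range.2 hk) hyi
  · have hcard := hgen.card_tangents_eq_two hy
    simp only [indicator_apply, mem_ofPred_eq, mem_compl_iff, hy, not_false_eq_true, if_true,
      Pi.one_apply, Finset.sum_boole, hcard]
    norm_num

lemma two_mul_measure_compl_absConvexHull [Fintype ι] [Nonempty ι] (hμ : μ ≪ volume) {x : ι → ℂ}
    (hx : (symmFamily x).Injective) :
    2 * μ (absConvexHull ℝ (range x))ᶜ =
      ∑ k, μ {y | ∀ j, x j ∈ strip y (symmFamily x k)} := by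
  have hhull : MeasurableSet (absConvexHull ℝ (range x))ᶜ :=
    (isClosed_absConvexHull_of_finite (finite_range x)).measurableSet.compl
  have htangent : ∀ k, MeasurableSet {y | ∀ j, x j ∈ strip y (symmFamily x k)} := fun k ↦
    ((isClosed_setOf_forall_mem_strip k).preimage
      (continuous_const.prodMk continuous_id)).measurableSet
  calc 2 * μ (absConvexHull ℝ (range x))ᶜ
    _ = ∫⁻ y, 2 * ((absConvexHull ℝ (range x))ᶜ).indicator 1 y ∂μ := by
      rw [lintegral_const_mul _ (measurable_one.indicator hhull), lintegral_indicator_one hhull]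
    _ = ∫⁻ y, ∑ k, {y | ∀ j, x j ∈ strip y (symmFamily x k)}.indicator 1 y ∂μ :=
      lintegral_congr_ae <| Filter.EventuallyEq.symm <|
        hμ.ae_le (ae_sum_indicator_forall_mem_strip hx)
    _ = ∑ k, μ {y | ∀ j, x j ∈ strip y (symmFamily x k)} := by
      rw [lintegral_finsetSum _ fun k _ ↦ measurable_one.indicator (htangent k)]
      simp only [lintegral_indicator_one (htangent _)]

variable [SigmaFinite μ] {M : ℕ}

lemma ae_pi_injective_symmFamily (hμ : μ ≪ volume) (n : ℕ) :
    ∀ᵐ x ∂(Measure.pi fun _ : Fin n ↦ μ), (symmFamily x).Injective :=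
  (absolutelyContinuous_pi_const hμ n).ae_le ae_injective_symmFamily

lemma aemeasurable_measure_compl_absConvexHull (hμ : μ ≪ volume) :
    AEMeasurable (fun x ↦ μ (absConvexHull ℝ (range x))ᶜ)
      (Measure.pi fun _ : Fin (M + 1) ↦ μ) := by
  have hmeas : Measurable fun x : Fin (M + 1) → ℂ ↦
      (∑ k, μ {y | ∀ j, x j ∈ strip y (symmFamily x k)}) / 2 :=
    (Finset.measurable_fun_sum _ fun k _ ↦ measurable_measure_prodMk_left
      (isClosed_setOf_forall_mem_strip k).measurableSet).div_const 2
  refine hmeas.aemeasurable.congr ?_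
  filter_upwards [ae_pi_injective_symmFamily hμ (M + 1)] with x hx
  rw [← two_mul_measure_compl_absConvexHull hμ hx, mul_comm,
    ENNReal.mul_div_cancel_right two_ne_zero ENNReal.ofNat_ne_top]

lemma pi_setOf_forall_mem_strip_symmFamily [μ.IsNegInvariant] (y : ℂ)
    (k : Fin (M + 1) ⊕ Fin (M + 1)) :
    Measure.pi (fun _ ↦ μ) {x | ∀ j, x j ∈ strip y (symmFamily x k)} =
      ∫⁻ a, μ (strip y a) ^ M ∂μ := by
  rcases k with i | i
  · exact pi_setOf_forall_mem_apply μ (isClosed_setOf_mem_strip continuous_const continuous_fst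
      continuous_snd).measurableSet (self_mem_strip y) i
  · rw [← lintegral_neg_eq_self]
    exact pi_setOf_forall_mem_apply μ (S := fun a ↦ strip y (-a))
      (isClosed_setOf_mem_strip continuous_const continuous_fst.neg continuous_snd).measurableSet
      (fun a ↦ neg_mem_strip_iff.1 (self_mem_strip y (-a))) i

theorem lintegral_measure_compl_absConvexHull [μ.IsNegInvariant] (hμ : μ ≪ volume) (M : ℕ) :
    ∫⁻ x, μ (absConvexHull ℝ (range x))ᶜ ∂(Measure.pi fun _ : Fin (M + 1) ↦ μ) =
      (M + 1) * ∫⁻ y, ∫⁻ a, μ (strip y a) ^ M ∂μ ∂μ := by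
  have htwo : 2 * ∫⁻ x, μ (absConvexHull ℝ (range x))ᶜ ∂(Measure.pi fun _ : Fin (M + 1) ↦ μ) =
      2 * ((M + 1) * ∫⁻ y, ∫⁻ a, μ (strip y a) ^ M ∂μ ∂μ) := by
    calc _ = ∫⁻ x, 2 * μ (absConvexHull ℝ (range x))ᶜ ∂(Measure.pi fun _ : Fin (M + 1) ↦ μ) :=
          (lintegral_const_mul'' _ (aemeasurable_measure_compl_absConvexHull hμ)).symm
      _ = ∫⁻ x, ∑ k, μ {y | ∀ j, x j ∈ strip y (symmFamily x k)}
            ∂(Measure.pi fun _ : Fin (M + 1) ↦ μ) :=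
        lintegral_congr_ae <| (ae_pi_injective_symmFamily hμ (M + 1)).mono fun x hx ↦
          two_mul_measure_compl_absConvexHull hμ hx
      _ = ∑ k, ∫⁻ x, μ {y | ∀ j, x j ∈ strip y (symmFamily x k)}
            ∂(Measure.pi fun _ : Fin (M + 1) ↦ μ) :=
        lintegral_finsetSum _ fun k _ ↦ measurable_measure_prodMk_left
          (isClosed_setOf_forall_mem_strip k).measurableSet
      _ = ∑ _ : Fin (M + 1) ⊕ Fin (M + 1), ∫⁻ y, ∫⁻ a, μ (strip y a) ^ M ∂μ ∂μ := by
        refine Finset.sum_congr rfl fun k _ ↦ ?_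
        exact (lintegral_measure_slice_comm
          (isClosed_setOf_forall_mem_strip k).measurableSet).trans <|
          lintegral_congr fun y ↦ pi_setOf_forall_mem_strip_symmFamily y k
      _ = _ := by
        rw [Finset.sum_const, Finset.card_univ, Fintype.card_sum, Fintype.card_fin, nsmul_eq_mul]
        push_cast
        ring
  exact (ENNReal.mul_right_inj two_ne_zero ENNReal.ofNat_ne_top).1 htwo

end MissedMeasure

section ExpectedArea

lemma integral_measureReal_absConvexHull {μ : Measure ℂ} [IsFiniteMeasure μ] [μ.IsNegInvariant]
    (hμ : μ ≪ volume) (M : ℕ) :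
    ∫ x, μ.real (absConvexHull ℝ (range x)) ∂(Measure.pi fun _ : Fin (M + 1) ↦ μ) =
      μ.real univ ^ (M + 2) - (M + 1) * (∫⁻ y, ∫⁻ a, μ (strip y a) ^ M ∂μ ∂μ).toReal := by
  set P := Measure.pi fun _ : Fin (M + 1) ↦ μ with hP
  have hcompl : ∀ x : Fin (M + 1) → ℂ, μ.real (absConvexHull ℝ (range x)) =
      μ.real univ - μ.real (absConvexHull ℝ (range x))ᶜ := fun x ↦ by
    rw [measureReal_compl (isClosed_absConvexHull_of_finite (finite_range x)).measurableSet,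
      sub_sub_cancel]
  have hmeas : AEMeasurable (fun x ↦ μ (absConvexHull ℝ (range x))ᶜ) P :=
    aemeasurable_measure_compl_absConvexHull hμ
  have hmissed : ∫ x, μ.real (absConvexHull ℝ (range x))ᶜ ∂P =
      (M + 1) * (∫⁻ y, ∫⁻ a, μ (strip y a) ^ M ∂μ ∂μ).toReal := by
    have hcast : ((M + 1 : ℝ≥0∞)).toReal = M + 1 := by
      exact_mod_cast ENNReal.toReal_natCast (M + 1)
    rw [← hcast, ← ENNReal.toReal_mul, ← lintegral_measure_compl_absConvexHull hμ]
    exact integral_toReal hmeas (.of_forall fun x ↦ measure_lt_top μ _)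
  have hint : Integrable (fun x ↦ μ.real (absConvexHull ℝ (range x))ᶜ) P :=
    .of_bound hmeas.ennreal_toReal.aestronglyMeasurable (μ.real univ) <| .of_forall fun x ↦ by
      rw [Real.norm_of_nonneg measureReal_nonneg]
      exact measureReal_mono (subset_univ _)
  have hP_univ : P.real univ = μ.real univ ^ (M + 1) := by
    simp [hP, Measure.real, Measure.pi_univ]
  simp only [hcompl]
  rw [integral_sub (integrable_const _) hint, integral_const, smul_eq_mul, hP_univ, hmissed]
  ring

lemma isNegInvariant_restrict {G : Type*} [MeasurableSpace G] [InvolutiveNeg G] [MeasurableNeg G]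
    {μ : Measure G} [μ.IsNegInvariant] {K : Set G} (hK : MeasurableSet K) (hneg : K = -K) :
    (μ.restrict K).IsNegInvariant where
  neg_eq_self := by
    have h := (Measure.measurePreserving_neg μ).restrict_preimage hK
    rw [neg_preimage, ← hneg] at h
    exact h.map_eq

lemma IsSymConvexBody.absConvexHull_subset {K s : Set E} (hK : IsSymConvexBody K) (hs : s ⊆ K) :
    absConvexHull ℝ s ⊆ K := by
  rw [← convexHull_union_neg_eq_absConvexHull]
  refine convexHull_min (union_subset hs ?_) hK.2.1
  rw [hK.2.2.2]
  exact neg_subset_neg.2 hs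

theorem IsSymConvexBody.expected_volume_absConvexHull {K : Set ℂ} (hK : IsSymConvexBody K)
    (M : ℕ) :
    (∫ x in univ.pi fun _ : Fin (M + 1) ↦ K,
        volume.real (absConvexHull ℝ (range x)) / volume.real K) / volume.real K ^ (M + 1) =
      1 - (M + 1) * (∫⁻ y in K, ∫⁻ a in K, volume (K ∩ strip y a) ^ M).toReal /
        volume.real K ^ (M + 2) := by
  have hKm : MeasurableSet K := hK.1.measurableSet
  have hpos : 0 < volume.real K :=
    ENNReal.toReal_pos (Measure.measure_pos_of_nonempty_interior volume hK.2.2.1).ne'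
      hK.1.measure_lt_top.ne
  have : Fact (volume K < ∞) := ⟨hK.1.measure_lt_top⟩
  have := isNegInvariant_restrict (μ := volume) hKm hK.2.2.2
  have hhull : ∫ x in univ.pi fun _ : Fin (M + 1) ↦ K, volume.real (absConvexHull ℝ (range x)) =
      ∫ x in univ.pi fun _ : Fin (M + 1) ↦ K,
        (volume.restrict K).real (absConvexHull ℝ (range x)) := by
    refine setIntegral_congr_fun (.univ_pi fun _ ↦ hKm) fun x hx ↦ ?_
    have hsub : absConvexHull ℝ (range x) ⊆ K :=
      hK.absConvexHull_subset (range_subset_iff.2 fun i ↦ hx i (mem_univ i))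
    simp only [measureReal_restrict_apply' hKm, inter_eq_left.2 hsub]
  have hstrip : ∀ y a, (volume.restrict K) (strip y a) = volume (K ∩ strip y a) := fun y a ↦ by
    rw [Measure.restrict_apply' hKm, inter_comm]
  rw [integral_div, hhull, volume_pi, Measure.restrict_pi_pi,
    integral_measureReal_absConvexHull Measure.absolutelyContinuous_restrict,
    measureReal_restrict_apply_univ]
  simp only [hstrip]
  field_simp
  ring

end ExpectedArea

section RotationInvariant

lemma measurePreserving_mul_left_of_norm_eq_one {u : ℂ} (hu : ‖u‖ = 1) :
    MeasurePreserving (u * ·) :=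
  (rotation (⟨u, mem_sphere_zero_iff_norm.2 hu⟩ : Circle)).measurePreserving

lemma measurableEmbedding_mul_left_of_norm_eq_one {u : ℂ} (hu : ‖u‖ = 1) :
    MeasurableEmbedding (u * ·) :=
  measurableEmbedding_mulLeft₀ (norm_ne_zero_iff.1 (hu ▸ one_ne_zero))

lemma lintegral_eq_of_rotation_invariant {g : ℂ → ℝ≥0∞} (hg : Measurable g)
    (hinv : ∀ u v, ‖u‖ = 1 → g (u * v) = g v) :
    ∫⁻ v, g v = ENNReal.ofReal (2 * π) * ∫⁻ r : ℝ in Ioi 0, ENNReal.ofReal r * g r := by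
  have hpolar : ∀ p : ℝ × ℝ, g (Complex.polarCoord.symm p) = g p.1 := fun p ↦ by
    have hnorm : ‖(Real.cos p.2 + Real.sin p.2 * Complex.I : ℂ)‖ = 1 := by
      exact_mod_cast Complex.norm_cos_add_sin_mul_I p.2
    rw [Complex.polarCoord_symm_apply, mul_comm, hinv _ _ hnorm]
  have hmeas : Measurable fun r : ℝ ↦ ENNReal.ofReal r * g r := by fun_prop
  have hmeas_fst : Measurable fun p : ℝ × ℝ ↦ ENNReal.ofReal p.1 * g p.1 := by fun_prop
  rw [← Complex.lintegral_comp_polarCoord_symm]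
  simp only [hpolar, smul_eq_mul]
  rw [polarCoord_target, Measure.volume_eq_prod, ← Measure.prod_restrict,
    lintegral_prod _ hmeas_fst.aemeasurable]
  simp only [lintegral_const, Measure.restrict_apply_univ, Real.volume_Ioo]
  rw [lintegral_mul_const _ hmeas, mul_comm, sub_neg_eq_add, two_mul]

lemma lintegral_complex_eq_lintegral_lintegral {g : ℂ → ℝ≥0∞} (hg : Measurable g) :
    ∫⁻ y, g y = ∫⁻ h : ℝ, ∫⁻ s : ℝ, g ⟨s, h⟩ := by
  have hmeas : Measurable fun p ↦ g (Complex.measurableEquivRealProd.symm p) := by fun_prop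
  rw [← Complex.volume_preserving_equiv_real_prod.symm.lintegral_comp hg, Measure.volume_eq_prod,
    lintegral_prod_symm _ hmeas.aemeasurable]
  rfl

/-- The Blaschke–Petkantschin change of variables, in the form it takes for integrands invariant
under simultaneous rotation: pairs of points are parametrised by the line joining them, which may be
rotated to be horizontal. -/
theorem lintegral_lintegral_eq_of_rotation_invariant {f : ℂ → ℂ → ℝ≥0∞}
    (hf : Measurable (Function.uncurry f))
    (hinv : ∀ u y a, ‖u‖ = 1 → f (u * y) (u * a) = f y a) :
    ∫⁻ y, ∫⁻ a, f y a = ENNReal.ofReal (2 * π) *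
      ∫⁻ h : ℝ, ∫⁻ s : ℝ, ∫⁻ r : ℝ in Ioi 0, ENNReal.ofReal r * f ⟨s, h⟩ ⟨s + r, h⟩ := by
  have hshift : Measurable fun p : ℂ × ℂ ↦ f p.1 (p.1 + p.2) :=
    hf.comp (measurable_fst.prodMk (measurable_fst.add measurable_snd))
  have hweight : Measurable fun p : ℂ × ℝ ↦ ENNReal.ofReal p.2 * f p.1 (p.1 + p.2) :=
    (ENNReal.measurable_ofReal.comp measurable_snd).mul
      (hshift.comp (measurable_fst.prodMk (Complex.measurable_ofReal.comp measurable_snd)))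
  have hweight_swap : Measurable fun p : ℝ × ℂ ↦ ENNReal.ofReal p.1 * f p.2 (p.2 + p.1) :=
    hweight.comp measurable_swap
  have hinv_diff : ∀ u v, ‖u‖ = 1 → ∫⁻ y, f y (y + u * v) = ∫⁻ y, f y (y + v) := fun u v hu ↦ by
    rw [← (measurePreserving_mul_left_of_norm_eq_one hu).lintegral_comp_emb
      (measurableEmbedding_mul_left_of_norm_eq_one hu)]
    simp only [← mul_add, hinv u _ _ hu]
  have hadd : ∀ s h r : ℝ, (⟨s, h⟩ + r : ℂ) = ⟨s + r, h⟩ := fun s h r ↦ by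
    apply Complex.ext <;> simp
  calc ∫⁻ y, ∫⁻ a, f y a
    _ = ∫⁻ y, ∫⁻ v, f y (y + v) := by simp only [lintegral_add_left_eq_self]
    _ = ∫⁻ v, ∫⁻ y, f y (y + v) := lintegral_lintegral_swap hshift.aemeasurable
    _ = ENNReal.ofReal (2 * π) * ∫⁻ r : ℝ in Ioi 0, ENNReal.ofReal r * ∫⁻ y, f y (y + r) :=
      lintegral_eq_of_rotation_invariant hshift.lintegral_prod_left' hinv_diff
    _ = ENNReal.ofReal (2 * π) * ∫⁻ y, ∫⁻ r : ℝ in Ioi 0, ENNReal.ofReal r * f y (y + r) := by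
      congr 1
      simp only [← lintegral_const_mul' _ _ ENNReal.ofReal_ne_top]
      exact lintegral_lintegral_swap hweight_swap.aemeasurable
    _ = _ := by
      rw [lintegral_complex_eq_lintegral_lintegral hweight.lintegral_prod_right']
      simp only [hadd]

end RotationInvariant

section Chord

lemma lintegral_indicator_one_mul {X : Type*} [MeasurableSpace X] {μ : Measure X} {S : Set X}
    (hS : MeasurableSet S) (f : X → ℝ≥0∞) :
    ∫⁻ x, S.indicator 1 x * f x ∂μ = ∫⁻ x in S, f x ∂μ := by
  rw [← lintegral_indicator hS]
  refine lintegral_congr fun x ↦ ?_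
  simp only [← indicator_mul_left S 1 f, Pi.one_apply, one_mul]

lemma lintegral_comp_abs (F : ℝ → ℝ≥0∞) : ∫⁻ x, F |x| = 2 * ∫⁻ x in Ioi 0, F x := by
  have hneg : ∫⁻ x in Iio 0, F |x| = ∫⁻ x in Ioi 0, F |x| := by
    rw [← (Measure.measurePreserving_neg volume).setLIntegral_comp_preimage_emb
      (MeasurableEquiv.neg ℝ).measurableEmbedding]
    simp only [neg_preimage, neg_Iio, neg_zero, abs_neg]
  rw [← lintegral_add_compl _ measurableSet_Ioi (A := Ioi (0 : ℝ)), compl_Ioi,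
    ← setLIntegral_congr Iio_ae_eq_Iic, hneg, ← two_mul,
    setLIntegral_congr_fun measurableSet_Ioi fun x hx ↦ by rw [abs_of_pos hx]]

lemma setLIntegral_Icc_ofReal {f : ℝ → ℝ} (hf : Continuous f) {a b : ℝ} (hab : a ≤ b)
    (hnonneg : ∀ x ∈ Icc a b, 0 ≤ f x) :
    ∫⁻ x in Icc a b, ENNReal.ofReal (f x) = ENNReal.ofReal (∫ x in a..b, f x) := by
  rw [intervalIntegral.integral_of_le hab, ← integral_Icc_eq_integral_Ioc,
    ofReal_integral_eq_lintegral_ofReal hf.continuousOn.integrableOn_Icc]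
  exact ae_restrict_of_forall_mem measurableSet_Icc hnonneg

lemma lintegral_Ioi_ofReal_mul_indicator_Icc {a b s : ℝ} (hs : s ∈ Icc a b) :
    ∫⁻ r in Ioi 0, ENNReal.ofReal r * (Icc a b).indicator 1 (s + r) =
      ENNReal.ofReal ((b - s) ^ 2 / 2) := by
  have hindicator : ∀ r ∈ Ici (0 : ℝ), ENNReal.ofReal r * (Icc a b).indicator 1 (s + r) =
      (Icc 0 (b - s)).indicator ENNReal.ofReal r := fun r (hr : 0 ≤ r) ↦ by
    have hmem : s + r ∈ Icc a b ↔ r ∈ Icc 0 (b - s) := by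
      simp only [mem_Icc] at hs ⊢
      grind
    by_cases h : r ∈ Icc 0 (b - s) <;> simp [indicator, hmem, h]
  rw [setLIntegral_congr Ioi_ae_eq_Ici, setLIntegral_congr_fun measurableSet_Ici hindicator,
    setLIntegral_indicator measurableSet_Icc, inter_eq_left.2 Icc_subset_Ici_self,
    setLIntegral_Icc_ofReal continuous_id' (sub_nonneg.2 hs.2) fun r hr ↦ hr.1]
  simp

lemma lintegral_Icc_lintegral_Ioi_ofReal_mul_indicator_Icc {a b : ℝ} (hab : a ≤ b) :
    ∫⁻ s in Icc a b, ∫⁻ r in Ioi 0, ENNReal.ofReal r * (Icc a b).indicator 1 (s + r) =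
      ENNReal.ofReal ((b - a) ^ 3 / 6) := by
  rw [setLIntegral_congr_fun measurableSet_Icc fun s hs ↦ lintegral_Ioi_ofReal_mul_indicator_Icc hs,
    setLIntegral_Icc_ofReal (by fun_prop) hab fun s _ ↦ by positivity,
    intervalIntegral.integral_div, intervalIntegral.integral_comp_sub_left (· ^ 2) b]
  congr 1
  simp only [sub_self, integral_pow]
  ring

end Chord

section Disc

lemma mk_mem_closedBall_zero_one_iff {a h : ℝ} :
    (⟨a, h⟩ : ℂ) ∈ closedBall 0 1 ↔ |h| ≤ 1 ∧ a ∈ Icc (-√(1 - h ^ 2)) √(1 - h ^ 2) := by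
  have hsq : (⟨a, h⟩ : ℂ) ∈ closedBall 0 1 ↔ a ^ 2 ≤ 1 - h ^ 2 := by
    rw [mem_closedBall_zero_iff, ← sq_le_one_iff₀ (norm_nonneg _), Complex.sq_norm,
      Complex.normSq_mk, ← sq, ← sq, le_sub_iff_add_le]
  rw [hsq, ← sq_le_one_iff_abs_le_one, mem_Icc, ← abs_le]
  refine ⟨fun ha ↦ ⟨by nlinarith, Real.abs_le_sqrt ha⟩, fun ⟨hh, ha⟩ ↦ ?_⟩
  rwa [Real.le_sqrt (abs_nonneg a) (sub_nonneg.2 hh), sq_abs] at ha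

lemma indicator_closedBall_mk {h : ℝ} (hh : |h| ≤ 1) (s : ℝ) :
    (closedBall (0 : ℂ) 1).indicator (1 : ℂ → ℝ≥0∞) ⟨s, h⟩ =
      (Icc (-√(1 - h ^ 2)) √(1 - h ^ 2)).indicator 1 s := by
  simp only [indicator, mk_mem_closedBall_zero_one_iff, hh, true_and, Pi.one_apply]

lemma lintegral_indicator_closedBall_mk_mul_lintegral (h : ℝ) :
    ∫⁻ s : ℝ, (closedBall (0 : ℂ) 1).indicator 1 ⟨s, h⟩ *
        ∫⁻ r in Ioi 0, ENNReal.ofReal r * (closedBall (0 : ℂ) 1).indicator 1 ⟨s + r, h⟩ =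
      ENNReal.ofReal (4 / 3 * √(1 - h ^ 2) ^ 3) := by
  by_cases hh : |h| ≤ 1
  · simp only [indicator_closedBall_mk hh]
    rw [lintegral_indicator_one_mul measurableSet_Icc,
      lintegral_Icc_lintegral_Ioi_ofReal_mul_indicator_Icc (neg_le_self (Real.sqrt_nonneg _))]
    ring_nf
  · have hnotMem : ∀ s : ℝ, (⟨s, h⟩ : ℂ) ∉ closedBall 0 1 := fun s hs ↦
      hh (mk_mem_closedBall_zero_one_iff.1 hs).1
    have hsqrt : √(1 - h ^ 2) = 0 :=
      Real.sqrt_eq_zero_of_nonpos (by linarith [not_le.1 (mt (sq_le_one_iff_abs_le_one h).1 hh)])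
    simp [indicator_of_notMem (hnotMem _), hsqrt]

lemma lintegral_closedBall_lintegral_closedBall {g : ℂ → ℂ → ℝ≥0∞} {G : ℝ → ℝ≥0∞}
    (hg : Measurable (Function.uncurry g)) (hinv : ∀ u y a, ‖u‖ = 1 → g (u * y) (u * a) = g y a)
    (hline : ∀ h s r : ℝ, 0 < r → g ⟨s, h⟩ ⟨s + r, h⟩ = G |h|) :
    ∫⁻ y in closedBall 0 1, ∫⁻ a in closedBall 0 1, g y a =
      ENNReal.ofReal (2 * π) * ∫⁻ h : ℝ, G |h| * ENNReal.ofReal (4 / 3 * √(1 - |h| ^ 2) ^ 3) := by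
  let χ : ℂ → ℝ≥0∞ := (closedBall 0 1).indicator 1
  have hχ : Measurable χ := measurable_one.indicator measurableSet_closedBall
  have hχ_mul : ∀ u y, ‖u‖ = 1 → χ (u * y) = χ y := fun u y hu ↦ by
    simp only [χ, indicator, mem_closedBall_zero_iff, norm_mul, hu, one_mul, Pi.one_apply]
  have hχ_ne_top : ∀ y, χ y ≠ ⊤ := fun y ↦ by
    by_cases hy : y ∈ closedBall 0 1 <;> simp [χ, hy]
  have hχ_mk : ∀ h : ℝ, Measurable fun s : ℝ ↦ χ ⟨s, h⟩ := fun h ↦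
    hχ.comp (Complex.measurableEquivRealProd.symm.measurable.comp measurable_prodMk_right)
  have hweight : ∀ h, Measurable (Function.uncurry fun s r : ℝ ↦ ENNReal.ofReal r * χ ⟨s + r, h⟩) :=
    fun h ↦ (ENNReal.measurable_ofReal.comp measurable_snd).mul
      ((hχ_mk h).comp (measurable_fst.add measurable_snd))
  have hchord : ∀ h : ℝ, Measurable fun s : ℝ ↦
      χ ⟨s, h⟩ * ∫⁻ r : ℝ in Ioi 0, ENNReal.ofReal r * χ ⟨s + r, h⟩ := fun h ↦
    (hχ_mk h).mul (hweight h).lintegral_prod_right'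
  calc ∫⁻ y in closedBall 0 1, ∫⁻ a in closedBall 0 1, g y a
    _ = ∫⁻ y, ∫⁻ a, χ y * (χ a * g y a) := by
      simp only [lintegral_const_mul' _ _ (hχ_ne_top _), χ,
        lintegral_indicator_one_mul measurableSet_closedBall]
    _ = ENNReal.ofReal (2 * π) * ∫⁻ h : ℝ, ∫⁻ s : ℝ, ∫⁻ r : ℝ in Ioi 0,
          ENNReal.ofReal r * (χ ⟨s, h⟩ * (χ ⟨s + r, h⟩ * g ⟨s, h⟩ ⟨s + r, h⟩)) :=
      lintegral_lintegral_eq_of_rotation_invariant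
        ((hχ.comp measurable_fst).mul ((hχ.comp measurable_snd).mul hg))
        fun u y a hu ↦ by rw [hχ_mul u y hu, hχ_mul u a hu, hinv u y a hu]
    _ = ENNReal.ofReal (2 * π) * ∫⁻ h : ℝ, G |h| * ∫⁻ s : ℝ, χ ⟨s, h⟩ *
          ∫⁻ r : ℝ in Ioi 0, ENNReal.ofReal r * χ ⟨s + r, h⟩ := by
      congr 1
      refine lintegral_congr fun h ↦ ?_
      rw [← lintegral_const_mul _ (hchord h)]
      refine lintegral_congr fun s ↦ ?_
      rw [← mul_assoc, ← lintegral_const_mul _ (hweight h).of_uncurry_left]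
      refine setLIntegral_congr_fun measurableSet_Ioi fun r hr ↦ ?_
      rw [hline h s r hr]
      ring
    _ = _ := by simp only [χ, lintegral_indicator_closedBall_mk_mul_lintegral, sq_abs]

lemma volume_closedBall_inter_strip_mul_mul {u : ℂ} (hu : ‖u‖ = 1) (y a : ℂ) :
    volume (closedBall 0 1 ∩ strip (u * y) (u * a)) = volume (closedBall 0 1 ∩ strip y a) := by
  rw [← (measurePreserving_mul_left_of_norm_eq_one hu).measure_preimage_emb
    (measurableEmbedding_mul_left_of_norm_eq_one hu)]
  congr 1
  ext w
  simp only [mem_preimage, mem_inter_iff, mem_closedBall_zero_iff, norm_mul, hu, one_mul,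
    mul_mem_strip_mul_mul_iff (norm_ne_zero_iff.1 (hu ▸ one_ne_zero))]

lemma measurable_volume_closedBall_inter_strip :
    Measurable (Function.uncurry fun y a : ℂ ↦ volume (closedBall 0 1 ∩ strip y a)) := by
  have hclosed : IsClosed {p : (ℂ × ℂ) × ℂ | p.2 ∈ closedBall 0 1 ∧ p.2 ∈ strip p.1.1 p.1.2} :=
    (isClosed_closedBall.preimage continuous_snd).inter
      (isClosed_setOf_mem_strip (by fun_prop) (by fun_prop) (by fun_prop))
  exact measurable_measure_prodMk_left hclosed.measurableSet

lemma volume_closedBall_inter_abs_im_le {h : ℝ} (h0 : 0 ≤ h) (h1 : h ≤ 1) :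
    volume (closedBall (0 : ℂ) 1 ∩ {w | |w.im| ≤ h}) =
      ENNReal.ofReal (∫ u in -h..h, 2 * √(1 - u ^ 2)) := by
  have hmeas : MeasurableSet (closedBall (0 : ℂ) 1 ∩ {w | |w.im| ≤ h}) :=
    measurableSet_closedBall.inter (measurableSet_le Complex.measurable_im.abs measurable_const)
  have hfin : ∀ u, (Icc (-h) h).indicator (1 : ℝ → ℝ≥0∞) u ≠ ⊤ := fun u ↦ by
    by_cases hu : u ∈ Icc (-h) h <;> simp [hu]
  have hslice : ∀ u s : ℝ, (closedBall (0 : ℂ) 1 ∩ {w | |w.im| ≤ h}).indicator 1 ⟨s, u⟩ =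
      (Icc (-h) h).indicator (1 : ℝ → ℝ≥0∞) u * (closedBall (0 : ℂ) 1).indicator 1 ⟨s, u⟩ :=
    fun u s ↦ by
    rw [inter_indicator_one, Pi.mul_apply, mul_comm]
    simp only [indicator, mem_ofPred_eq, mem_Icc, abs_le, Pi.one_apply]
  rw [← lintegral_indicator_one hmeas,
    lintegral_complex_eq_lintegral_lintegral (measurable_one.indicator hmeas)]
  simp only [hslice, lintegral_const_mul' _ _ (hfin _)]
  rw [lintegral_indicator_one_mul measurableSet_Icc,
    ← setLIntegral_Icc_ofReal (by fun_prop) (by linarith) fun u _ ↦ by positivity]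
  refine setLIntegral_congr_fun measurableSet_Icc fun u hu ↦ ?_
  simp only [indicator_closedBall_mk ((abs_le.2 hu).trans h1),
    lintegral_indicator_one measurableSet_Icc, Real.volume_Icc]
  ring_nf

lemma volume_closedBall_inter_abs_im_le_sin {t : ℝ} (ht : t ∈ Icc 0 π) :
    volume (closedBall (0 : ℂ) 1 ∩ {w | |w.im| ≤ Real.sin (t / 2)}) =
      ENNReal.ofReal (t + Real.sin t) := by
  have hcos : ∀ x ∈ uIcc (-(t / 2)) (t / 2),
      2 * √(1 - Real.sin x ^ 2) * Real.cos x = 1 + Real.cos (2 * x) := fun x hx ↦ by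
    rw [uIcc_of_le (by linarith [ht.1]), mem_Icc] at hx
    have hnonneg : 0 ≤ Real.cos x :=
      Real.cos_nonneg_of_mem_Icc ⟨by linarith [ht.2], by linarith [ht.2]⟩
    rw [← Real.cos_sq', Real.sqrt_sq hnonneg, Real.cos_two_mul]
    ring
  rw [volume_closedBall_inter_abs_im_le
    (Real.sin_nonneg_of_nonneg_of_le_pi (by linarith [ht.1]) (by linarith [ht.1, ht.2]))
    (Real.sin_le_one _), ← Real.sin_neg,
    ← intervalIntegral.integral_comp_mul_deriv (g := fun u : ℝ ↦ 2 * √(1 - u ^ 2))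
      (fun x _ ↦ Real.hasDerivAt_sin x) Real.continuous_cos.continuousOn (by fun_prop)]
  simp only [Function.comp_apply]
  rw [intervalIntegral.integral_congr hcos, intervalIntegral.integral_add (by simp)
    (Continuous.intervalIntegrable (by fun_prop) _ _),
    intervalIntegral.integral_comp_mul_left Real.cos two_ne_zero]
  congr 1
  simp only [integral_cos, integral_one, smul_eq_mul, mul_neg, Real.sin_neg,
    mul_div_cancel₀ t two_ne_zero]
  ring

lemma image_sin_half_Icc : (fun t ↦ Real.sin (t / 2)) '' Icc 0 π = Icc 0 1 := by
  have hends : Real.sin (0 / 2) = 0 ∧ Real.sin (π / 2) = 1 := by simp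
  refine Subset.antisymm ?_ ?_
  · rintro _ ⟨t, ht, rfl⟩
    exact ⟨Real.sin_nonneg_of_nonneg_of_le_pi (by linarith [ht.1]) (by linarith [ht.1, ht.2]),
      Real.sin_le_one _⟩
  · simpa only [hends] using intermediate_value_Icc Real.pi_pos.le
      (f := fun t ↦ Real.sin (t / 2)) (by fun_prop)

lemma lintegral_Ioi_mul_sqrt_one_sub_sq_pow (G : ℝ → ℝ≥0∞) :
    ∫⁻ h in Ioi 0, G h * ENNReal.ofReal (4 / 3 * √(1 - h ^ 2) ^ 3) =
      ∫⁻ t in Icc 0 π, G (Real.sin (t / 2)) * ENNReal.ofReal ((1 + Real.cos t) ^ 2 / 6) := by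
  have hmono : MonotoneOn (fun t ↦ Real.sin (t / 2)) (Icc 0 π) := fun s hs t ht hst ↦
    Real.sin_le_sin_of_le_of_le_pi_div_two (by linarith [hs.1, Real.pi_pos]) (by linarith [ht.2])
      (by linarith)
  have hderiv : ∀ t ∈ Icc 0 π, HasDerivWithinAt (fun t ↦ Real.sin (t / 2))
      (Real.cos (t / 2) * 2⁻¹) (Icc 0 π) t := fun t _ ↦ by
    simpa [div_eq_mul_inv] using ((hasDerivAt_id t).div_const 2).sin.hasDerivWithinAt
  have htail : ∫⁻ h in Ioi 0 \ Iic 1, G h * ENNReal.ofReal (4 / 3 * √(1 - h ^ 2) ^ 3) = 0 := by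
    refine setLIntegral_eq_zero (measurableSet_Ioi.diff measurableSet_Iic) fun h hh ↦ ?_
    have hsqrt : √(1 - h ^ 2) = 0 := Real.sqrt_eq_zero_of_nonpos (by nlinarith [notMem_Iic.1 hh.2])
    simp [hsqrt]
  rw [← lintegral_inter_add_sdiff _ _ measurableSet_Iic (B := Iic (1 : ℝ)), htail, add_zero,
    Ioi_inter_Iic, setLIntegral_congr Ioc_ae_eq_Icc, ← image_sin_half_Icc,
    lintegral_image_eq_lintegral_deriv_mul_of_monotoneOn measurableSet_Icc hderiv hmono]
  refine setLIntegral_congr_fun measurableSet_Icc fun t ht ↦ ?_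
  have hcos : 0 ≤ Real.cos (t / 2) :=
    Real.cos_nonneg_of_mem_Icc ⟨by linarith [ht.1, Real.pi_pos], by linarith [ht.2]⟩
  have hhalf : Real.cos (t / 2) ^ 2 = (1 + Real.cos t) / 2 := by
    rw [Real.cos_sq, mul_div_cancel₀ t two_ne_zero]
    ring
  rw [← Real.cos_sq', Real.sqrt_sq hcos, mul_left_comm, ← ENNReal.ofReal_mul (by positivity)]
  congr 2
  linear_combination (2 / 3 * (Real.cos (t / 2) ^ 2 + (1 + Real.cos t) / 2)) * hhalf

theorem lintegral_closedBall_volume_inter_strip_pow (M : ℕ) :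
    ∫⁻ y in closedBall 0 1, ∫⁻ a in closedBall 0 1, volume (closedBall 0 1 ∩ strip y a) ^ M =
      ENNReal.ofReal (2 * π / 3 * ∫ t in 0..π, (t + Real.sin t) ^ M * (1 + Real.cos t) ^ 2) := by
  let G (h : ℝ) : ℝ≥0∞ := volume (closedBall (0 : ℂ) 1 ∩ {w | |w.im| ≤ h}) ^ M
  have hnonneg : ∀ t ∈ Icc 0 π, 0 ≤ t + Real.sin t := fun t ht ↦
    add_nonneg ht.1 (Real.sin_nonneg_of_mem_Icc ht)
  calc ∫⁻ y in closedBall 0 1, ∫⁻ a in closedBall 0 1, volume (closedBall 0 1 ∩ strip y a) ^ M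
    _ = ENNReal.ofReal (2 * π) * ∫⁻ h : ℝ, G |h| * ENNReal.ofReal (4 / 3 * √(1 - |h| ^ 2) ^ 3) :=
      lintegral_closedBall_lintegral_closedBall
        (measurable_volume_closedBall_inter_strip.pow_const M)
        (fun u y a hu ↦ by rw [volume_closedBall_inter_strip_mul_mul hu])
        (fun h s r hr ↦ by rw [strip_mk_mk hr])
    _ = ENNReal.ofReal (2 * π) * (2 * ∫⁻ t in Icc 0 π,
          G (Real.sin (t / 2)) * ENNReal.ofReal ((1 + Real.cos t) ^ 2 / 6)) := by
      rw [lintegral_comp_abs fun h ↦ G h * ENNReal.ofReal (4 / 3 * √(1 - h ^ 2) ^ 3),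
        lintegral_Ioi_mul_sqrt_one_sub_sq_pow]
    _ = ENNReal.ofReal (2 * π) * (2 * ∫⁻ t in Icc 0 π,
          ENNReal.ofReal ((t + Real.sin t) ^ M * (1 + Real.cos t) ^ 2 / 6)) := by
      congr 2
      refine setLIntegral_congr_fun measurableSet_Icc fun t ht ↦ ?_
      have hpow : 0 ≤ (t + Real.sin t) ^ M := pow_nonneg (hnonneg t ht) M
      simp only [G]
      rw [volume_closedBall_inter_abs_im_le_sin ht, ← ENNReal.ofReal_pow (hnonneg t ht),
        ← ENNReal.ofReal_mul hpow, mul_div_assoc]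
    _ = _ := by
      rw [setLIntegral_Icc_ofReal (by fun_prop) Real.pi_pos.le fun t ht ↦ by
          have := hnonneg t ht; positivity,
        ← ENNReal.ofReal_ofNat 2, ← ENNReal.ofReal_mul zero_le_two,
        ← ENNReal.ofReal_mul Real.two_pi_pos.le, intervalIntegral.integral_div]
      ring_nf

end Disc

section Isometry

variable {F : Type*} [NormedAddCommGroup F] [InnerProductSpace ℝ F] [FiniteDimensional ℝ F]
  [MeasurableSpace F] [BorelSpace F] {n : ℕ} (e : F ≃ₗᵢ[ℝ] EuclideanSpace ℝ (Fin n))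

lemma volume_image_linearIsometryEquiv (S : Set F) : volume (e '' S) = volume S := by
  rw [e.image_eq_preimage_symm]
  exact e.symm.measurePreserving.measure_preimage_emb e.symm.toHomeomorph.measurableEmbedding S

lemma volume_convexHull_range_linearIsometryEquiv_comp {ι : Type*} (x : ι → F) :
    volume (convexHull ℝ (range (e ∘ x) ∪ -range (e ∘ x))) =
      volume (absConvexHull ℝ (range x)) := by
  have hneg : -(e '' range x) = e '' (-range x) := by
    simp only [← image_neg_eq_neg, image_image, map_neg]
  rw [range_comp, hneg, ← image_union, ← convexHull_union_neg_eq_absConvexHull,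
    ← volume_image_linearIsometryEquiv e]
  exact congrArg volume
    (e.toLinearEquiv.toLinearMap.image_convexHull (range x ∪ -range x)).symm

lemma momentV_image_linearIsometryEquiv (N : ℕ) (K : Set F) (p : ℝ) :
    momentV n N (e '' K) p = (∫ x in univ.pi fun _ : Fin N ↦ K,
      (volume.real (absConvexHull ℝ (range x)) / volume.real K) ^ p) / volume.real K ^ N := by
  let φ : (Fin N → F) ≃ᵐ (Fin N → EuclideanSpace ℝ (Fin n)) :=
    .piCongrRight fun _ ↦ e.toHomeomorph.toMeasurableEquiv
  have hφ : MeasurePreserving φ :=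
    volume_preserving_pi (f := fun _ : Fin N ↦ (e : F → EuclideanSpace ℝ (Fin n)))
      fun _ ↦ e.measurePreserving
  have hφ_apply : ∀ x, φ x = e ∘ x := fun _ ↦ rfl
  have hdomain : φ ⁻¹' {x | ∀ i, x i ∈ e '' K} = univ.pi fun _ ↦ K := by
    ext x
    simp [hφ_apply]
  rw [momentV, ← hφ.setIntegral_preimage_emb φ.measurableEmbedding, hdomain,
    volume_image_linearIsometryEquiv]
  simp only [hφ_apply, volume_convexHull_range_linearIsometryEquiv_comp, Measure.real]

end Isometry

section DiscFormula

lemma isSymConvexBody_closedBall {r : ℝ} [FiniteDimensional ℝ E] (hr : 0 < r) :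
    IsSymConvexBody (closedBall (0 : E) r) := by
  refine ⟨isCompact_closedBall 0 r, convex_closedBall 0 r, ?_, ?_⟩
  · exact ⟨0, ball_subset_interior_closedBall (mem_ball_self hr)⟩
  · rw [neg_closedBall, neg_zero]

lemma volumeReal_complex_closedBall_zero_one : volume.real (closedBall (0 : ℂ) 1) = π := by
  simp [Measure.real, Complex.volume_closedBall]

lemma momentV_disc_succ (M : ℕ) :
    momentV 2 (M + 1) (closedBall (0 : EuclideanSpace ℝ (Fin 2)) 1) 1 =
      1 - 2 * (M + 1) / (3 * π ^ (M + 1)) *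
        ∫ t in 0..π, (t + Real.sin t) ^ M * (1 + Real.cos t) ^ 2 := by
  have hnonneg : 0 ≤ ∫ t in 0..π, (t + Real.sin t) ^ M * (1 + Real.cos t) ^ 2 :=
    intervalIntegral.integral_nonneg Real.pi_pos.le fun t ht ↦
      mul_nonneg (pow_nonneg (add_nonneg ht.1 (Real.sin_nonneg_of_mem_Icc ht)) M) (sq_nonneg _)
  have himage : closedBall (0 : EuclideanSpace ℝ (Fin 2)) 1 =
      Complex.orthonormalBasisOneI.repr '' closedBall 0 1 := by
    rw [LinearIsometryEquiv.image_closedBall, map_zero]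
  rw [himage, momentV_image_linearIsometryEquiv]
  simp only [Real.rpow_one]
  rw [(isSymConvexBody_closedBall one_pos).expected_volume_absConvexHull,
    lintegral_closedBall_volume_inter_strip_pow, volumeReal_complex_closedBall_zero_one,
    ENNReal.toReal_ofReal (by positivity)]
  field_simp
  ring

end DiscFormula

section Values

open Real

lemma integral_add_sin_mul_one_add_cos_sq :
    ∫ t in 0..π, (t + sin t) * (1 + cos t) ^ 2 = 3 * π ^ 2 / 4 - 4 / 3 := by
  have hderiv (t : ℝ) : HasDerivAt
      (fun t ↦ 3 / 4 * t ^ 2 + t * sin t * (2 + 1 / 2 * cos t) +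
        (cos t - 3 / 4 * cos t ^ 2 - 1 / 3 * cos t ^ 3))
      ((t + sin t) * (1 + cos t) ^ 2) t := by
    have ht := hasDerivAt_id' t
    have hs := hasDerivAt_sin t
    have hc := hasDerivAt_cos t
    refine ((((ht.fun_pow 2).const_mul (3 / 4)).fun_add
      ((ht.fun_mul hs).fun_mul ((hc.const_mul (1 / 2)).const_add 2))).fun_add
      ((hc.fun_sub ((hc.fun_pow 2).const_mul (3 / 4))).fun_sub
        ((hc.fun_pow 3).const_mul (1 / 3)))).congr_deriv ?_
    push_cast
    linear_combination -1 / 2 * t * sin_sq_add_cos_sq t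
  rw [intervalIntegral.integral_eq_sub_of_hasDerivAt (fun t _ ↦ hderiv t)
    (Continuous.intervalIntegrable (by fun_prop) _ _)]
  simp only [sin_pi, cos_pi, sin_zero, cos_zero]
  ring

lemma integral_add_sin_sq_mul_one_add_cos_sq :
    ∫ t in 0..π, (t + sin t) ^ 2 * (1 + cos t) ^ 2 = π ^ 3 / 2 - 35 * π / 24 := by
  have hderiv (t : ℝ) : HasDerivAt
      (fun t ↦ 1 / 2 * t ^ 3 + t ^ 2 * sin t * (2 + 1 / 2 * cos t) +
        t * (11 / 8 + 2 * cos t - 3 / 2 * cos t ^ 2 - 2 / 3 * cos t ^ 3) +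
        sin t * (-(8 / 9) + 3 / 8 * cos t - 4 / 9 * cos t ^ 2 - 1 / 4 * cos t ^ 3))
      ((t + sin t) ^ 2 * (1 + cos t) ^ 2) t := by
    have ht := hasDerivAt_id' t
    have hs := hasDerivAt_sin t
    have hc := hasDerivAt_cos t
    have hcubic (a b c d : ℝ) : HasDerivAt
        (fun t ↦ a + b * cos t - c * cos t ^ 2 - d * cos t ^ 3)
        (-sin t * (b - 2 * c * cos t - 3 * d * cos t ^ 2)) t := by
      refine ((((hc.const_mul b).const_add a).fun_sub ((hc.fun_pow 2).const_mul c)).fun_sub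
        ((hc.fun_pow 3).const_mul d)).congr_deriv ?_
      push_cast
      ring
    refine (((((ht.fun_pow 3).const_mul (1 / 2)).fun_add
      (((ht.fun_pow 2).fun_mul hs).fun_mul ((hc.const_mul (1 / 2)).const_add 2))).fun_add
      (ht.fun_mul (hcubic (11 / 8) 2 (3 / 2) (2 / 3)))).fun_add
      (hs.fun_mul (hcubic (-(8 / 9)) (3 / 8) (4 / 9) (1 / 4)))).congr_deriv ?_
    push_cast
    linear_combination (-1 / 2 * t ^ 2 - (1 + cos t) ^ 2 -
      (3 / 8 - 8 / 9 * cos t - 3 / 4 * cos t ^ 2)) * sin_sq_add_cos_sq t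
  rw [intervalIntegral.integral_eq_sub_of_hasDerivAt (fun t _ ↦ hderiv t)
    (Continuous.intervalIntegrable (by fun_prop) _ _)]
  simp only [sin_pi, cos_pi, sin_zero, cos_zero]
  ring

end Values

/-- For every integer `N ≥ 2`,
`𝔼 V_{ℰ²,N} = 1 − (2N/(3π^N)) ∫₀^π (t + sin t)^{N−1} (1 + cos t)² dt`, where `ℰ²` is the
closed unit disc in `ℝ²`; in particular `𝔼 V_{ℰ²,2} = 16/(9π²)` and
`𝔼 V_{ℰ²,3} = 35/(12π²)`. -/
theorem momentV_disc_formula (N : ℕ) (hN : 2 ≤ N) :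
    (momentV 2 N (Metric.closedBall (0 : EuclideanSpace ℝ (Fin 2)) 1) 1 =
      1 - (2 * N / (3 * π ^ N)) *
        ∫ t in (0 : ℝ)..π, (t + Real.sin t) ^ (N - 1) * (1 + Real.cos t) ^ 2) ∧
    momentV 2 2 (Metric.closedBall (0 : EuclideanSpace ℝ (Fin 2)) 1) 1 = 16 / (9 * π ^ 2) ∧
    momentV 2 3 (Metric.closedBall (0 : EuclideanSpace ℝ (Fin 2)) 1) 1 = 35 / (12 * π ^ 2) := by
  refine ⟨?_, ?_, ?_⟩
  · obtain ⟨M, rfl⟩ : ∃ M, N = M + 1 := ⟨N - 1, by omega⟩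
    exact_mod_cast momentV_disc_succ M
  · rw [momentV_disc_succ 1]
    simp only [pow_one, integral_add_sin_mul_one_add_cos_sq]
    field_simp
    ring
  · rw [momentV_disc_succ 2, integral_add_sin_sq_mul_one_add_cos_sq]
    field_simp
    ring
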